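/- A bordism with empty boundary (i.e. with projection p = 0) defines a closed cycle: if (F,Q,0,0) is a bordism of (𝒜,B)-chains, then Q = Q* and π(a)(i ± Q)^{-1} is B-compact for every a ∈ A, so (F,Q) is a closed (𝒜,B)-cycle. -/

import Mathlib

/-!
Core framework for unbounded KK-theory following Deeley–Goffeng–Mesland,
"The bordism group of unbounded KK-cycles".

We model Hilbert C*-modules over a C*-algebra `B` as bundled structures, and
(unbounded) regular operators via their graphs.
-/

noncomputable section

namespace UKK

open Complex

/-- A (right) Hilbert C*-module over a C*-algebra `B`, bundled together with its
`B`-valued inner product and right `B`-action. -/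
structure HilbMod (B : Type) [NonUnitalCStarAlgebra B] : Type 1 where
  carrier : Type
  [nacg : NormedAddCommGroup carrier]
  [nsc : NormedSpace ℂ carrier]
  [cs : CompleteSpace carrier]
  /-- the right action of `B` -/
  smulB : carrier → B → carrier
  /-- the `B`-valued inner product -/
  inner : carrier → carrier → B
  inner_add_right : ∀ x y z : carrier, inner x (y + z) = inner x y + inner x z
  inner_smul_right : ∀ (x : carrier) (c : ℂ) (y : carrier), inner x (c • y) = c • inner x y
  inner_smulB_right : ∀ (x y : carrier) (b : B), inner x (smulB y b) = inner x y * b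
  star_inner : ∀ x y : carrier, star (inner x y) = inner y x
  norm_sq_eq : ∀ x : carrier, ‖x‖ ^ 2 = ‖inner x x‖
  norm_inner_le : ∀ x y : carrier, ‖inner x y‖ ≤ ‖x‖ * ‖y‖
  add_smulB : ∀ (x y : carrier) (b : B), smulB (x + y) b = smulB x b + smulB y b
  smulB_add : ∀ (x : carrier) (b₁ b₂ : B), smulB x (b₁ + b₂) = smulB x b₁ + smulB x b₂
  smulB_mul : ∀ (x : carrier) (b₁ b₂ : B), smulB x (b₁ * b₂) = smulB (smulB x b₁) b₂
  smul_smulB : ∀ (c : ℂ) (x : carrier) (b : B), smulB (c • x) b = c • smulB x b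

attribute [instance] HilbMod.nacg HilbMod.nsc HilbMod.cs

variable {B : Type} [NonUnitalCStarAlgebra B]

/-- A bounded adjointable (`B`-linear) operator between Hilbert `B`-modules. -/
structure Adj (E F : HilbMod B) where
  toFun : E.carrier →L[ℂ] F.carrier
  adjFun : F.carrier →L[ℂ] E.carrier
  map_smulB : ∀ x b, toFun (E.smulB x b) = F.smulB (toFun x) b
  adj_map_smulB : ∀ y b, adjFun (F.smulB y b) = E.smulB (adjFun y) b
  inner_adj : ∀ x y, F.inner (toFun x) y = E.inner x (adjFun y)

/-- The graph of a (possibly unbounded) `B`-linear operator `E ⇢ F`: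
a `ℂ`-submodule of `E × F` which is `B`-invariant and single-valued. -/
def IsOperatorGraph (E F : HilbMod B) (G : Set (E.carrier × F.carrier)) : Prop :=
  (∃ S : Submodule ℂ (E.carrier × F.carrier), (S : Set (E.carrier × F.carrier)) = G) ∧
  (∀ p ∈ G, ∀ b : B, (E.smulB p.1 b, F.smulB p.2 b) ∈ G) ∧
  (∀ y : F.carrier, ((0 : E.carrier), y) ∈ G → y = 0)

/-- The domain of an operator graph. -/
def gdom {E F : HilbMod B} (G : Set (E.carrier × F.carrier)) : Set E.carrier :=
  Prod.fst '' G

/-- The graph of the adjoint operator: `(y, z) ∈ G(D*)` iff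
`⟪Dx, y⟫ = ⟪x, z⟫` for all `(x, Dx) ∈ G(D)`. -/
def adjointGraph (E F : HilbMod B) (G : Set (E.carrier × F.carrier)) :
    Set (F.carrier × E.carrier) :=
  {q | ∀ p ∈ G, F.inner p.2 q.1 = E.inner p.1 q.2}

/-- A semi-regular operator: a closed densely defined operator graph with densely
defined adjoint. -/
def IsSemiRegular (E F : HilbMod B) (G : Set (E.carrier × F.carrier)) : Prop :=
  IsOperatorGraph E F G ∧ IsClosed G ∧ Dense (gdom G) ∧ Dense (gdom (adjointGraph E F G))

/-- A regular operator: a semi-regular operator such that `1 + D*D` has dense range. -/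
def IsRegular (E F : HilbMod B) (G : Set (E.carrier × F.carrier)) : Prop :=
  IsSemiRegular E F G ∧
    Dense {w : E.carrier | ∃ x y z, (x, y) ∈ G ∧ (y, z) ∈ adjointGraph E F G ∧ w = x + z}

/-- A symmetric operator: `D ⊆ D*`. -/
def IsSymmetricGraph (E : HilbMod B) (G : Set (E.carrier × E.carrier)) : Prop :=
  G ⊆ adjointGraph E E G

/-- A self-adjoint operator: `D = D*`. -/
def IsSelfAdjointGraph (E : HilbMod B) (G : Set (E.carrier × E.carrier)) : Prop :=
  adjointGraph E E G = G

/-- The sum of two operators, with domain the intersection of the domains. -/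
def sumGraph (E F : HilbMod B) (G₁ G₂ : Set (E.carrier × F.carrier)) :
    Set (E.carrier × F.carrier) :=
  {p | ∃ y₁ y₂, (p.1, y₁) ∈ G₁ ∧ (p.1, y₂) ∈ G₂ ∧ p.2 = y₁ + y₂}

/-- Finite rank operators `z ↦ ∑ vᵢ · ⟪wᵢ, z⟫`. -/
def finiteRankSet (E F : HilbMod B) : Set (E.carrier →L[ℂ] F.carrier) :=
  {S | ∃ (n : ℕ) (v : Fin n → F.carrier) (w : Fin n → E.carrier),
    ∀ z, S z = ∑ i, F.smulB (v i) (E.inner (w i) z)}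

/-- `B`-compact operators: norm limits of finite rank operators. -/
def IsCompactOp (E F : HilbMod B) (T : E.carrier →L[ℂ] F.carrier) : Prop :=
  T ∈ closure (finiteRankSet E F)

/-- `C` is a bounded adjointable extension of the commutator `[D, T]`,
and `T` preserves the domain of `D`.  This says `T ∈ Lip(D)` with commutator `C`. -/
def IsLipFor (E : HilbMod B) (G : Set (E.carrier × E.carrier)) (T C : Adj E E) : Prop :=
  ∀ p ∈ G, ∃ y', (T.toFun p.1, y') ∈ G ∧ C.toFun p.1 = y' - T.toFun p.2

/-- Membership in the Lipschitz algebra `Lip(D)` of the operator with graph `G`. -/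
def MemLip (E : HilbMod B) (G : Set (E.carrier × E.carrier)) (T : Adj E E) : Prop :=
  ∃ C : Adj E E, IsLipFor E G T C

/-- A *-representation of a C*-algebra `A` by adjointable operators on a
Hilbert `B`-module. -/
structure RepOn (A : Type) [NonUnitalCStarAlgebra A] {B : Type} [NonUnitalCStarAlgebra B]
    (E : HilbMod B) where
  π : A → Adj E E
  π_add : ∀ a₁ a₂ x, (π (a₁ + a₂)).toFun x = (π a₁).toFun x + (π a₂).toFun x
  π_mul : ∀ a₁ a₂ x, (π (a₁ * a₂)).toFun x = (π a₁).toFun ((π a₂).toFun x)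
  π_smul : ∀ (c : ℂ) a x, (π (c • a)).toFun x = c • (π a).toFun x
  π_star : ∀ a, (π (star a)).toFun = (π a).adjFun

/-- A grading operator (a self-adjoint adjointable involution) on a Hilbert module. -/
structure GradingOf (E : HilbMod B) where
  γ : Adj E E
  invol : ∀ x, γ.toFun (γ.toFun x) = x
  selfadj : γ.adjFun = γ.toFun

/-- A dense *-subalgebra `𝒜 ⊆ A`, equipped with a (locally convex) topology finer
than the C*-topology. -/
structure DenseSub (A : Type) [NonUnitalCStarAlgebra A] where
  alg : NonUnitalStarSubalgebra ℂ A
  dense : Dense (alg : Set A)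
  top : TopologicalSpace alg
  cont : @Continuous _ _ top _ (Subtype.val : alg → A)

variable {A : Type} [NonUnitalCStarAlgebra A]

/-- The conditions of an `(𝒜,B)`-chain: a regular operator `D` (odd when graded),
with `A` acting by even operators, such that the representation restricts to a
continuous homomorphism `𝒜 → Lip(D)`. -/
def IsChainOn (𝓐 : DenseSub A) (E : HilbMod B) (ρ : RepOn A E) (gr : Option (GradingOf E))
    (G : Set (E.carrier × E.carrier)) : Prop :=
  IsRegular E E G ∧
  (∀ g, gr = some g →
    (∀ (a : A) x, g.γ.toFun ((ρ.π a).toFun x) = (ρ.π a).toFun (g.γ.toFun x)) ∧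
    (∀ p ∈ G, (g.γ.toFun p.1, -(g.γ.toFun p.2)) ∈ G)) ∧
  (∃ Λ : 𝓐.alg → Adj E E,
    (∀ a : 𝓐.alg, IsLipFor E G (ρ.π (a : A)) (Λ a)) ∧
    @Continuous _ _ 𝓐.top _
      (fun a : 𝓐.alg => (((ρ.π (a : A)).toFun : E.carrier →L[ℂ] E.carrier), (Λ a).toFun)))

/-- Local compactness of the resolvents `π(a)(D ± i)⁻¹`. -/
def HasLocallyCompactResolvent (E : HilbMod B) (ρ : RepOn A E)
    (G : Set (E.carrier × E.carrier)) : Prop :=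
  ∀ (a : A) (s : ℝ), s = 1 ∨ s = -1 →
    ∃ C : E.carrier →L[ℂ] E.carrier, IsCompactOp E E C ∧
      ∀ p ∈ G, C (p.2 + ((s : ℂ) * Complex.I) • p.1) = (ρ.π a).toFun p.1

/-- The conditions of a closed `(𝒜,B)`-cycle. -/
def IsCycleOn (𝓐 : DenseSub A) (E : HilbMod B) (ρ : RepOn A E) (gr : Option (GradingOf E))
    (G : Set (E.carrier × E.carrier)) : Prop :=
  IsChainOn 𝓐 E ρ gr G ∧ IsSelfAdjointGraph E G ∧ HasLocallyCompactResolvent E ρ G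

/-- The conditions of a symmetric `(𝒜,B)`-chain. -/
def IsSymmetricChainOn (𝓐 : DenseSub A) (E : HilbMod B) (ρ : RepOn A E)
    (gr : Option (GradingOf E)) (G : Set (E.carrier × E.carrier)) : Prop :=
  IsChainOn 𝓐 E ρ gr G ∧ IsSymmetricGraph E G

/-- A closed `(𝒜,B)`-cycle. -/
structure KKCycle (𝓐 : DenseSub A) (B : Type) [NonUnitalCStarAlgebra B] : Type 1 where
  E : HilbMod B
  ρ : RepOn A E
  gr : Option (GradingOf E)
  G : Set (E.carrier × E.carrier)
  is : IsCycleOn 𝓐 E ρ gr G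

/-- A symmetric `(𝒜,B)`-chain. -/
structure SChain (𝓐 : DenseSub A) (B : Type) [NonUnitalCStarAlgebra B] : Type 1 where
  E : HilbMod B
  ρ : RepOn A E
  gr : Option (GradingOf E)
  G : Set (E.carrier × E.carrier)
  is : IsSymmetricChainOn 𝓐 E ρ gr G

/-- A unitary isomorphism of Hilbert `B`-modules. -/
structure UIso (E F : HilbMod B) where
  u : Adj E F
  linv : ∀ x, u.adjFun (u.toFun x) = x
  rinv : ∀ y, u.toFun (u.adjFun y) = y

/-- A decomposition of `E` as the direct sum of `E₁` and `E₂`, given by a pair of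
isometric embeddings with orthogonal ranges and dense total range. -/
structure SumDecomp (E E₁ E₂ : HilbMod B) where
  j₁ : Adj E₁ E
  j₂ : Adj E₂ E
  isom₁ : ∀ x y, E.inner (j₁.toFun x) (j₁.toFun y) = E₁.inner x y
  isom₂ : ∀ x y, E.inner (j₂.toFun x) (j₂.toFun y) = E₂.inner x y
  orth : ∀ x y, E.inner (j₁.toFun x) (j₂.toFun y) = 0
  total : Dense {z : E.carrier | ∃ x y, z = j₁.toFun x + j₂.toFun y}

/-- `c` is (isomorphic to) the direct sum of the cycles `c₁` and `c₂`. -/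
def IsSumOf {𝓐 : DenseSub A} (c c₁ c₂ : KKCycle 𝓐 B) : Prop :=
  ∃ d : SumDecomp c.E c₁.E c₂.E,
    (∀ (a : A) x, (c.ρ.π a).toFun (d.j₁.toFun x) = d.j₁.toFun ((c₁.ρ.π a).toFun x)) ∧
    (∀ (a : A) x, (c.ρ.π a).toFun (d.j₂.toFun x) = d.j₂.toFun ((c₂.ρ.π a).toFun x)) ∧
    (c.G = {pr | ∃ p₁ ∈ c₁.G, ∃ p₂ ∈ c₂.G,
        pr = (d.j₁.toFun p₁.1 + d.j₂.toFun p₂.1, d.j₁.toFun p₁.2 + d.j₂.toFun p₂.2)}) ∧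
    (c.gr.isSome = c₁.gr.isSome ∧ c.gr.isSome = c₂.gr.isSome) ∧
    (∀ g g₁, c.gr = some g → c₁.gr = some g₁ →
      ∀ x, g.γ.toFun (d.j₁.toFun x) = d.j₁.toFun (g₁.γ.toFun x)) ∧
    (∀ g g₂, c.gr = some g → c₂.gr = some g₂ →
      ∀ x, g.γ.toFun (d.j₂.toFun x) = d.j₂.toFun (g₂.γ.toFun x))

/-- `c'` is (isomorphic to) the inverse `-c` of the cycle `c`: for odd cycles the
sign of the operator is reversed, for even cycles the grading is reversed. -/
def IsNegOf {𝓐 : DenseSub A} (c' c : KKCycle 𝓐 B) : Prop :=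
  ∃ u : UIso c.E c'.E,
    (∀ (a : A) x, u.u.toFun ((c.ρ.π a).toFun x) = (c'.ρ.π a).toFun (u.u.toFun x)) ∧
    ((c.gr = none ∧ c'.gr = none ∧
        ∀ pr : c.E.carrier × c.E.carrier,
          pr ∈ c.G ↔ (u.u.toFun pr.1, -u.u.toFun pr.2) ∈ c'.G) ∨
     (∃ g g', c.gr = some g ∧ c'.gr = some g' ∧
        (∀ pr : c.E.carrier × c.E.carrier,
          pr ∈ c.G ↔ (u.u.toFun pr.1, u.u.toFun pr.2) ∈ c'.G) ∧
        ∀ x, u.u.toFun (g.γ.toFun x) = -(g'.γ.toFun (u.u.toFun x))))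

/-- Isomorphism of cycles. -/
def CycleIso {𝓐 : DenseSub A} (c c' : KKCycle 𝓐 B) : Prop :=
  ∃ u : UIso c.E c'.E,
    (∀ (a : A) x, u.u.toFun ((c.ρ.π a).toFun x) = (c'.ρ.π a).toFun (u.u.toFun x)) ∧
    (∀ pr : c.E.carrier × c.E.carrier,
      pr ∈ c.G ↔ (u.u.toFun pr.1, u.u.toFun pr.2) ∈ c'.G) ∧
    (c.gr = none ↔ c'.gr = none) ∧
    (∀ g g', c.gr = some g → c'.gr = some g' →
      ∀ x, u.u.toFun (g.γ.toFun x) = g'.γ.toFun (u.u.toFun x))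

/-! ### Function classes on the interval -/

/-- `C^∞_c(0,1]`: smooth functions vanishing near `0`. -/
def SmoothVan0 (φ : ℝ → ℂ) : Prop :=
  ContDiff ℝ (⊤ : ℕ∞) φ ∧ ∃ ε > (0 : ℝ), ∀ t ≤ ε, φ t = 0

/-- `C^∞_c(0,1)`: smooth functions vanishing near `0` and near `1`. -/
def SmoothVan01 (φ : ℝ → ℂ) : Prop :=
  SmoothVan0 φ ∧ ∃ ε > (0 : ℝ), ∀ t, 1 - ε ≤ t → φ t = 0

/-- `C¹₀((0,1]) `: `C¹` functions with `φ(0) = 0` and `φ'(0) = 0`. -/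
def C1Van0 (φ : ℝ → ℂ) : Prop :=
  ContDiff ℝ 1 φ ∧ φ 0 = 0 ∧ deriv φ 0 = 0

/-! ### Boundary data and Hilsum bordisms -/

/-- Boundary data `(θ, p)` for a closed cycle `c = (E, D)` relative to a symmetric
chain `Fc = (F, Q)`, together with a model `L` of the cylinder `L²[0,1] ⊗̂ E`
(with its `C[0,1]`-action `mult`, its `A`-action `ρL` and the operator `Ψ(D)`,
whose graph is `PsiG`). -/
structure BoundaryData {𝓐 : DenseSub A} (Fc : SChain 𝓐 B) (c : KKCycle 𝓐 B) where
  L : HilbMod B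
  ρL : RepOn A L
  mult : (ℝ → ℂ) → Adj L L
  mult_mul : ∀ φ ψ : ℝ → ℂ, Continuous φ → Continuous ψ →
    ∀ x, (mult (fun t => φ t * ψ t)).toFun x = (mult φ).toFun ((mult ψ).toFun x)
  mult_add : ∀ φ ψ : ℝ → ℂ, Continuous φ → Continuous ψ →
    ∀ x, (mult (fun t => φ t + ψ t)).toFun x = (mult φ).toFun x + (mult ψ).toFun x
  mult_star : ∀ φ : ℝ → ℂ, Continuous φ →
    (mult (fun t => (starRingEnd ℂ) (φ t))).toFun = (mult φ).adjFun
  mult_comm_rep : ∀ (φ : ℝ → ℂ) (a : A) x,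
    (mult φ).toFun ((ρL.π a).toFun x) = (ρL.π a).toFun ((mult φ).toFun x)
  /-- the chain has complementary parity to the cycle -/
  parity : Fc.gr.isSome ↔ c.gr = none
  /-- the graph of the operator `Ψ(D)` on the cylinder -/
  PsiG : Set (L.carrier × L.carrier)
  psi_symm : IsSymmetricGraph L PsiG
  psi_semireg : IsSemiRegular L L PsiG
  /-- the projection `p` -/
  p : Adj Fc.E Fc.E
  p_idem : ∀ x, p.toFun (p.toFun x) = p.toFun x
  p_sa : p.adjFun = p.toFun
  p_comm : ∀ (a : A) x, p.toFun ((Fc.ρ.π a).toFun x) = (Fc.ρ.π a).toFun (p.toFun x)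
  /-- the isomorphism `θ : pF ≅ L²[0,1] ⊗̂ E`, as a coisometry on `F` with
  `θ*θ = p`. -/
  θ : Adj Fc.E L
  θ_p : ∀ x, θ.toFun (p.toFun x) = θ.toFun x
  θ_coisom : ∀ z, θ.toFun (θ.adjFun z) = z
  θ_isom : ∀ x, θ.adjFun (θ.toFun x) = p.toFun x
  θ_rep : ∀ (a : A) x, θ.toFun ((Fc.ρ.π a).toFun x) = (ρL.π a).toFun (θ.toFun x)

namespace BoundaryData

variable {𝓐 : DenseSub A} {Fc : SChain 𝓐 B} {c : KKCycle 𝓐 B}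

/-- The operator `b(φ) = θ (φ ⊗ 1) θ⁻¹ p + φ(1)(1-p)` on `F`. -/
def bop0 (d : BoundaryData Fc c) (φ : ℝ → ℂ) (x : Fc.E.carrier) : Fc.E.carrier :=
  d.θ.adjFun ((d.mult φ).toFun (d.θ.toFun x)) + φ 1 • (x - d.p.toFun x)

/-- The operator `b(φ ⊗ a)` on `F`. -/
def bopA (d : BoundaryData Fc c) (φ : ℝ → ℂ) (a : A) (x : Fc.E.carrier) : Fc.E.carrier :=
  d.bop0 φ ((Fc.ρ.π a).toFun x)

/-- Hilsum's boundary conditions: `c` is a boundary of the symmetric chain `Fc`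
with boundary data `(θ, p)`. -/
def IsBoundaryOf (d : BoundaryData Fc c) : Prop :=
  (∀ φ : ℝ → ℂ, SmoothVan0 φ →
    ∀ x ∈ gdom (adjointGraph Fc.E Fc.E Fc.G), d.bop0 φ x ∈ gdom Fc.G) ∧
  (∀ φ : ℝ → ℂ, SmoothVan01 φ →
    ((fun z => (d.mult φ).toFun z) '' gdom d.PsiG
        = (fun x => d.θ.toFun (d.bop0 φ x)) '' gdom Fc.G) ∧
    (∀ x w, x ∈ gdom Fc.G → (d.bop0 φ x, w) ∈ Fc.G →
      (d.θ.toFun (d.bop0 φ x), d.θ.toFun w) ∈ d.PsiG)) ∧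
  (∀ φ₁ φ₂ : ℝ → ℂ, ContDiff ℝ (⊤ : ℕ∞) φ₁ → ContDiff ℝ (⊤ : ℕ∞) φ₂ →
    (∀ t ∈ Set.Icc (0 : ℝ) 1, φ₁ t * φ₂ t = 0) →
    ∀ x w, (d.bop0 φ₂ x, w) ∈ Fc.G → d.bop0 φ₁ w = 0)

/-- `(Fc, Q, θ, p)` is a bordism: the boundary conditions hold, and the induced
symmetric `(C¹₀((0,1],𝒜), B)`-chain is half-closed. -/
def IsBordism (d : BoundaryData Fc c) : Prop :=
  d.IsBoundaryOf ∧
  (∀ φ : ℝ → ℂ, C1Van0 φ → ∀ a : 𝓐.alg,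
    (∃ T C : Adj Fc.E Fc.E, (∀ x, T.toFun x = d.bopA φ (a : A) x) ∧ IsLipFor Fc.E Fc.G T C) ∧
    (∀ x ∈ gdom (adjointGraph Fc.E Fc.E Fc.G), d.bopA φ (a : A) x ∈ gdom Fc.G) ∧
    (∃ K : Fc.E.carrier →L[ℂ] Fc.E.carrier, IsCompactOp Fc.E Fc.E K ∧
      ∀ x y z, (x, y) ∈ Fc.G → (y, z) ∈ adjointGraph Fc.E Fc.E Fc.G →
        K (x + z) = d.bopA φ (a : A) x))

end BoundaryData

/-- A closed cycle is nullbordant when it is the boundary of a bordism. -/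
def Nullbordant {𝓐 : DenseSub A} (c : KKCycle 𝓐 B) : Prop :=
  ∃ (Fc : SChain 𝓐 B) (d : BoundaryData Fc c), d.IsBordism

/-- Hilsum's bordism relation: `c₁ ∼_bor c₂` iff `c₁ + (-c₂)` is nullbordant. -/
def Bordant {𝓐 : DenseSub A} (c₁ c₂ : KKCycle 𝓐 B) : Prop :=
  ∃ n₂ s : KKCycle 𝓐 B, IsNegOf n₂ c₂ ∧ IsSumOf s c₁ n₂ ∧ Nullbordant s

/-- The bordism group `Ω_*(𝒜, B)` (as a set of bordism classes). -/
def Omega (𝓐 : DenseSub A) (B : Type) [NonUnitalCStarAlgebra B] : Type 1 :=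
  Quot (fun c c' : KKCycle 𝓐 B => Bordant c c')

end UKK

end

namespace UKK

/-!
When `p = 0` the isometry `θ` vanishes too, so `b(φ) = φ(1)`: for a cutoff `φ` with `φ(1) = 1` the
operator `b(φ)` is the identity. The first boundary condition then says `Dom Q* ⊆ Dom Q`, that is
`Q = Q*`, and half-closedness says that `π(a)(1 + Q²)⁻¹` is `B`-compact for `a ∈ 𝒜`.

For `T = π(a)(Q ± i)⁻¹` one has `TT* = π(a)(1 + Q²)⁻¹π(a*)`, which is thus `B`-compact. The
adjointable operators form a C*-algebra in which `T` is a norm limit of operators `TT*X`, so `T` is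
`B`-compact. A representation of a C*-algebra is contractive, so compactness passes from the dense
subalgebra `𝒜` to `A`.
-/

section EmptyBoundary

open scoped ComplexConjugate

variable {A B : Type} [NonUnitalCStarAlgebra A] [NonUnitalCStarAlgebra B] {D E F : HilbMod B}

namespace HilbMod

section

variable (E)

theorem inner_add_left (x y z : E.carrier) : E.inner (x + y) z = E.inner x z + E.inner y z := by
  rw [← E.star_inner, E.inner_add_right, star_add, E.star_inner, E.star_inner]

theorem inner_smul_left (c : ℂ) (x y : E.carrier) : E.inner (c • x) y = conj c • E.inner x y := by
  rw [← E.star_inner, E.inner_smul_right, star_smul, E.star_inner, starRingEnd_apply]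

/-- The inner product as a bounded sesquilinear map, from which it inherits compatibility with
subtraction and joint continuity. -/
noncomputable def innerSL : E.carrier →L⋆[ℂ] E.carrier →L[ℂ] B :=
  (LinearMap.mk₂'ₛₗ (starRingEnd ℂ) (RingHom.id ℂ) E.inner E.inner_add_left E.inner_smul_left
    E.inner_add_right fun c x y => E.inner_smul_right x c y).mkContinuous₂ 1
    fun x y => (E.norm_inner_le x y).trans_eq (by rw [one_mul])

theorem inner_sub_left (x y z : E.carrier) : E.inner (x - y) z = E.inner x z - E.inner y z :=
  E.innerSL.map_sub₂ x y z

theorem inner_sub_right (x y z : E.carrier) : E.inner x (y - z) = E.inner x y - E.inner x z :=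
  map_sub (E.innerSL x) y z

theorem continuous_inner : Continuous fun p : E.carrier × E.carrier => E.inner p.1 p.2 :=
  (E.innerSL.continuous.comp continuous_fst).clm_apply continuous_snd

end

theorem eq_zero_of_inner_self_eq_zero {x : E.carrier} (hx : E.inner x x = 0) : x = 0 := by
  simpa [hx] using E.norm_sq_eq x

theorem eq_of_forall_mem_dense_inner_eq {S : Set E.carrier} (hS : Dense S) {x y : E.carrier}
    (h : ∀ v ∈ S, E.inner v x = E.inner v y) : x = y := by
  have hclosed : IsClosed {v | E.inner v x = E.inner v y} :=
    isClosed_eq (E.continuous_inner.comp (.prodMk_left x))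
      (E.continuous_inner.comp (.prodMk_left y))
  have hall : E.inner (x - y) x = E.inner (x - y) y := closure_minimal h hclosed (hS (x - y))
  refine sub_eq_zero.1 (eq_zero_of_inner_self_eq_zero ?_)
  rw [E.inner_sub_right, hall, sub_self]

theorem ext_inner_left {x y : E.carrier} (h : ∀ v, E.inner v x = E.inner v y) : x = y :=
  eq_of_forall_mem_dense_inner_eq dense_univ fun v _ => h v

end HilbMod

/-! ### The C*-algebra of adjointable operators -/

/-- A bounded operator with a bounded adjoint, as an adjointable operator: `B`-linearity of both
is automatic. -/
def Adj.ofInner (T : E.carrier →L[ℂ] F.carrier) (S : F.carrier →L[ℂ] E.carrier)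
    (h : ∀ x y, F.inner (T x) y = E.inner x (S y)) : Adj E F where
  toFun := T
  adjFun := S
  map_smulB x b := HilbMod.ext_inner_left fun v => by
    have h' (u : E.carrier) : F.inner v (T u) = E.inner (S v) u := by
      rw [← F.star_inner, h, E.star_inner]
    rw [h', E.inner_smulB_right, F.inner_smulB_right, h']
  adj_map_smulB y b := HilbMod.ext_inner_left fun v => by
    rw [← h, F.inner_smulB_right, E.inner_smulB_right, h]
  inner_adj := h

namespace Adj

theorem inner_adjFun_left (T : Adj E F) (y : F.carrier) (x : E.carrier) :
    E.inner (T.adjFun y) x = F.inner y (T.toFun x) := by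
  rw [← E.star_inner, ← T.inner_adj, F.star_inner]

theorem adjFun_eq_of_toFun_eq {S T : Adj E F} (h : S.toFun = T.toFun) : S.adjFun = T.adjFun := by
  ext y
  exact HilbMod.ext_inner_left fun v => by rw [← S.inner_adj, ← T.inner_adj, h]

/-- The adjoint `T*` as an adjointable operator. -/
def adjoint (T : Adj E F) : Adj F E :=
  .ofInner T.adjFun T.toFun T.inner_adjFun_left

end Adj

/-- The algebra `End*_B(E)` of adjointable operators, as a subalgebra of the bounded operators so
that it inherits its algebraic structure and norm. -/
def adjointable (E : HilbMod B) : Subalgebra ℂ (E.carrier →L[ℂ] E.carrier) where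
  carrier := Set.range Adj.toFun
  mul_mem' := by
    rintro _ _ ⟨S, rfl⟩ ⟨T, rfl⟩
    exact ⟨.ofInner (S.toFun * T.toFun) (T.adjFun * S.adjFun) fun x y => by
      simp [S.inner_adj, T.inner_adj], rfl⟩
  add_mem' := by
    rintro _ _ ⟨S, rfl⟩ ⟨T, rfl⟩
    exact ⟨.ofInner (S.toFun + T.toFun) (S.adjFun + T.adjFun) fun x y => by
      simp [S.inner_adj, T.inner_adj, E.inner_add_left, E.inner_add_right], rfl⟩
  algebraMap_mem' c :=
    ⟨.ofInner (algebraMap ℂ _ c) (algebraMap ℂ _ (conj c)) fun x y => by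
      simp [Algebra.algebraMap_eq_smul_one, E.inner_smul_left, E.inner_smul_right], rfl⟩

/-- An adjointable operator as an element of `End*_B(E)`. -/
def Adj.toAdjointable (T : Adj E E) : adjointable E :=
  ⟨T.toFun, T, rfl⟩

namespace adjointable

noncomputable instance : Star (adjointable E) where
  star T := T.2.choose.adjoint.toAdjointable

theorem star_toAdjointable (T : Adj E E) : star T.toAdjointable = T.adjoint.toAdjointable :=
  Subtype.ext (Adj.adjFun_eq_of_toFun_eq T.toAdjointable.2.choose_spec)

theorem inner_apply_left (T : adjointable E) (x y : E.carrier) :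
    E.inner (T.1 x) y = E.inner x ((star T).1 y) := by
  obtain ⟨_, T, rfl⟩ := T
  exact (T.inner_adj x y).trans
    (congrArg (fun S : adjointable E => E.inner x (S.1 y)) (star_toAdjointable T).symm)

theorem eq_star_of_inner {S T : adjointable E}
    (h : ∀ x y, E.inner (T.1 x) y = E.inner x (S.1 y)) : S = star T := by
  refine Subtype.ext (ContinuousLinearMap.ext fun y => HilbMod.ext_inner_left fun x => ?_)
  rw [← h, inner_apply_left]

noncomputable instance : StarRing (adjointable E) where
  star_involutive T := Eq.symm <| eq_star_of_inner fun x y => by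
    rw [← E.star_inner, ← inner_apply_left, E.star_inner]
  star_mul S T := Eq.symm <| eq_star_of_inner fun x y => by
    simp [inner_apply_left]
  star_add S T := Eq.symm <| eq_star_of_inner fun x y => by
    simp [inner_apply_left, E.inner_add_left, E.inner_add_right]

instance : StarModule ℂ (adjointable E) where
  star_smul c T := Eq.symm <| eq_star_of_inner fun x y => by
    simp [inner_apply_left, E.inner_smul_left, E.inner_smul_right]

theorem norm_apply_sq_le (T : adjointable E) (x : E.carrier) :
    ‖T.1 x‖ ^ 2 ≤ ‖star T * T‖ * ‖x‖ ^ 2 :=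
  calc ‖T.1 x‖ ^ 2 = ‖E.inner x ((star T * T).1 x)‖ := by
        rw [E.norm_sq_eq, inner_apply_left]; rfl
    _ ≤ ‖x‖ * ‖(star T * T).1 x‖ := E.norm_inner_le _ _
    _ ≤ ‖x‖ * (‖star T * T‖ * ‖x‖) := by gcongr; exact (star T * T).1.le_opNorm x
    _ = ‖star T * T‖ * ‖x‖ ^ 2 := by ring

instance : CStarRing (adjointable E) where
  norm_mul_self_le T := by
    have hT : ‖T‖ ≤ √‖star T * T‖ := T.1.opNorm_le_bound (by positivity) fun x => by
      refine le_of_sq_le_sq ?_ (by positivity)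
      rw [mul_pow, Real.sq_sqrt (norm_nonneg (star T * T))]
      exact norm_apply_sq_le T x
    rw [← sq]
    exact (Real.le_sqrt (norm_nonneg T) (norm_nonneg _)).1 hT

instance : CompleteSpace (adjointable E) := by
  refine Metric.complete_of_cauchySeq_tendsto fun T hT => ?_
  have hval : UniformContinuous (Subtype.val : adjointable E → E.carrier →L[ℂ] E.carrier) :=
    uniformContinuous_subtype_val
  have hstar : UniformContinuous (star : adjointable E → adjointable E) :=
    (star_isometry (E := adjointable E)).uniformContinuous
  obtain ⟨S, hS⟩ := cauchySeq_tendsto_of_complete (hval.comp_cauchySeq hT)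
  obtain ⟨S', hS'⟩ := cauchySeq_tendsto_of_complete ((hval.comp hstar).comp_cauchySeq hT)
  have hadj (x y : E.carrier) : E.inner (S x) y = E.inner x (S' y) := by
    have hleft := (E.continuous_inner.tendsto _).comp
      ((hS.eval_const x).prodMk_nhds (tendsto_const_nhds (x := y)))
    have hright := (E.continuous_inner.tendsto _).comp
      ((tendsto_const_nhds (x := x)).prodMk_nhds (hS'.eval_const y))
    exact tendsto_nhds_unique hleft (hright.congr fun n => (inner_apply_left (T n) x y).symm)
  exact ⟨(Adj.ofInner S S' hadj).toAdjointable, tendsto_subtype_rng.2 hS⟩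

noncomputable instance : CStarAlgebra (adjointable E) where

end adjointable

/-- A representation by adjointable operators as a homomorphism of C*-algebras. -/
def RepOn.toStarAlgHom (ρ : RepOn A E) : A →⋆ₙₐ[ℂ] adjointable E where
  toFun a := (ρ.π a).toAdjointable
  map_smul' c a := Subtype.ext (ContinuousLinearMap.ext (ρ.π_smul c a))
  map_zero' := Subtype.ext (ContinuousLinearMap.ext fun x => by
    simpa [Adj.toAdjointable] using ρ.π_smul 0 0 x)
  map_add' a b := Subtype.ext (ContinuousLinearMap.ext (ρ.π_add a b))
  map_mul' a b := Subtype.ext (ContinuousLinearMap.ext (ρ.π_mul a b))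
  map_star' a := by
    rw [adjointable.star_toAdjointable]
    exact Subtype.ext (ρ.π_star a)

theorem RepOn.continuous_toFun (ρ : RepOn A E) : Continuous fun a => (ρ.π a).toFun :=
  continuous_subtype_val.comp <| AddMonoidHomClass.continuous_of_bound ρ.toStarAlgHom 1 fun a => by
    simpa only [one_mul] using NonUnitalStarAlgHom.norm_apply_le ρ.toStarAlgHom a

section CStarAlgebra

variable {M : Type*} [CStarAlgebra M]

theorem norm_cfc_mul_star_self_mul_sq {g : ℝ → ℝ} (a : M)
    (hg : ContinuousOn g (spectrum ℝ (a * star a))) :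
    ‖cfc g (a * star a) * a‖ ^ 2 = ‖cfc (fun t => g t * t * g t) (a * star a)‖ := by
  have hself : star (cfc g (a * star a)) = cfc g (a * star a) := cfc_predicate g (a * star a)
  rw [sq, ← CStarRing.norm_self_mul_star, star_mul, hself, cfc_mul _ _ _, cfc_mul _ _ _,
    cfc_id' ℝ (a * star a)]
  simp only [mul_assoc]

theorem norm_sub_mul_star_self_mul_sq_le (a : M) {ε : ℝ} (hε : 0 < ε) :
    ‖a - a * star a * (cfc (fun t : ℝ => (|t| + ε)⁻¹) (a * star a) * a)‖ ^ 2 ≤ ε := by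
  have hf : Continuous fun t : ℝ => (|t| + ε)⁻¹ :=
    (continuous_abs.add continuous_const).inv₀ fun t =>
      (add_pos_of_nonneg_of_pos (abs_nonneg t) hε).ne'
  have htf : Continuous fun t : ℝ => t * (|t| + ε)⁻¹ := continuous_id.mul hf
  have hcfc : cfc (fun t : ℝ => 1 - t * (|t| + ε)⁻¹) (a * star a) =
      1 - a * star a * cfc (fun t : ℝ => (|t| + ε)⁻¹) (a * star a) := by
    rw [cfc_sub (fun _ => 1) _ (a * star a) (by fun_prop) htf.continuousOn,
      cfc_const_one ℝ (a * star a), cfc_mul (fun t => t) _ (a * star a) (by fun_prop)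
        hf.continuousOn, cfc_id' ℝ (a * star a)]
  rw [← mul_assoc, ← one_sub_mul, ← hcfc,
    norm_cfc_mul_star_self_mul_sq (g := fun t => 1 - t * (|t| + ε)⁻¹) a
      (continuous_const.sub htf).continuousOn]
  refine norm_cfc_le hε.le fun t ht => ?_
  have ht : 0 ≤ t := by
    rw [← star_star a, star_star (star a)] at ht
    exact spectrum_star_mul_self_nonneg t ht
  have hgt : 1 - t * (|t| + ε)⁻¹ = ε / (t + ε) := by
    rw [abs_of_nonneg ht]
    field_simp
    ring
  rw [hgt, Real.norm_of_nonneg (by positivity)]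
  calc ε / (t + ε) * t * (ε / (t + ε)) = ε * (ε / (t + ε) * (t / (t + ε))) := by ring
    _ ≤ ε * (1 * 1) := by
      gcongr <;> exact div_le_one_of_le₀ (by linarith) (by positivity)
    _ = ε := by ring

theorem mem_closure_range_mul_star_self_mul (a : M) :
    a ∈ closure (Set.range fun x => a * star a * x) := by
  refine Metric.mem_closure_range_iff.2 fun δ hδ => ?_
  have h := norm_sub_mul_star_self_mul_sq_le a (show 0 < (δ / 2) ^ 2 by positivity)
  refine ⟨_, (dist_eq_norm _ _).trans_lt ((le_of_sq_le_sq h (by positivity)).trans_lt ?_)⟩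
  exact half_lt_self hδ

end CStarAlgebra

/-! ### Compact operators -/

namespace IsCompactOp

theorem comp_adj {K : E.carrier →L[ℂ] F.carrier} (hK : IsCompactOp E F K) (S : Adj D E) :
    IsCompactOp D F (K.comp S.toFun) := by
  have hcont : Continuous fun T : E.carrier →L[ℂ] F.carrier => T.comp S.toFun := by fun_prop
  refine map_mem_closure (f := fun T => T.comp S.toFun) hcont hK ?_
  rintro T ⟨n, v, w, hT⟩
  exact ⟨n, v, fun i => S.adjFun (w i), fun z => by
    simp only [ContinuousLinearMap.comp_apply, hT, S.inner_adjFun_left]⟩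

theorem of_mul_star_self {T : adjointable E} (hT : IsCompactOp E E (T * star T).1) :
    IsCompactOp E E T.1 := by
  have hclosed : IsClosed {X : adjointable E | IsCompactOp E E X.1} :=
    isClosed_closure.preimage continuous_subtype_val
  refine closure_minimal ?_ hclosed (mem_closure_range_mul_star_self_mul T)
  rintro _ ⟨⟨_, X, rfl⟩, rfl⟩
  exact hT.comp_adj X

end IsCompactOp

/-! ### Symmetric operators and their resolvents -/

theorem snd_eq_of_mem_adjointGraph {G : Set (E.carrier × F.carrier)} (hG : Dense (gdom G))
    {y : F.carrier} {z z' : E.carrier} (hz : (y, z) ∈ adjointGraph E F G)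
    (hz' : (y, z') ∈ adjointGraph E F G) : z = z' := by
  refine HilbMod.eq_of_forall_mem_dense_inner_eq hG ?_
  rintro _ ⟨p, hp, rfl⟩
  exact (hz p hp).symm.trans (hz' p hp)

namespace IsSymmetricGraph

variable {G : Set (E.carrier × E.carrier)}

theorem isSelfAdjointGraph (hG : IsSymmetricGraph E G) (hdense : Dense (gdom G))
    (hdom : gdom (adjointGraph E E G) ⊆ gdom G) : IsSelfAdjointGraph E G := by
  refine Set.Subset.antisymm ?_ hG
  rintro ⟨y, z⟩ hyz
  obtain ⟨⟨_, w⟩, hyw, rfl⟩ := hdom ⟨_, hyz, rfl⟩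
  rwa [snd_eq_of_mem_adjointGraph hdense hyz (hG hyw)]

-- `E.inner x x` is not assumed positive, so `‖D x‖` and `‖z • x‖` cannot be read off a Pythagorean
-- identity; they are bounded by applying the triangle inequality to this equality instead.
theorem norm_snd_add_smul_fst (hG : IsSymmetricGraph E G) {z : ℂ} (hz : conj z = -z)
    {p : E.carrier × E.carrier} (hp : p ∈ G) : ‖p.2 + z • p.1‖ = ‖p.2 - z • p.1‖ := by
  have h := hG hp p hp
  rw [← sq_eq_sq₀ (norm_nonneg _) (norm_nonneg _), E.norm_sq_eq, E.norm_sq_eq]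
  congr 1
  simp only [E.inner_add_right, E.inner_sub_right, E.inner_add_left, E.inner_sub_left,
    E.inner_smul_right, E.inner_smul_left, h, hz]
  module

theorem norm_smul_fst_le (hG : IsSymmetricGraph E G) {z : ℂ} (hz : conj z = -z)
    {p : E.carrier × E.carrier} (hp : p ∈ G) : ‖z • p.1‖ ≤ ‖p.2 + z • p.1‖ := by
  have htriangle := norm_sub_le (p.2 + z • p.1) (p.2 - z • p.1)
  have hdouble : (p.2 + z • p.1) - (p.2 - z • p.1) = (2 : ℂ) • z • p.1 := by module
  rw [hdouble, norm_smul, Complex.norm_two, ← hG.norm_snd_add_smul_fst hz hp] at htriangle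
  linarith

theorem norm_snd_le (hG : IsSymmetricGraph E G) {z : ℂ} (hz : conj z = -z)
    {p : E.carrier × E.carrier} (hp : p ∈ G) : ‖p.2‖ ≤ ‖p.2 + z • p.1‖ := by
  have htriangle := norm_add_le (p.2 + z • p.1) (p.2 - z • p.1)
  have hdouble : (p.2 + z • p.1) + (p.2 - z • p.1) = (2 : ℂ) • p.2 := by module
  rw [hdouble, norm_smul, Complex.norm_two, ← hG.norm_snd_add_smul_fst hz hp] at htriangle
  linarith

end IsSymmetricGraph

/-- The operator `D + z`, as a bounded operator on the graph `G` of `D`. -/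
noncomputable def addSMulOnGraph (G : Submodule ℂ (E.carrier × E.carrier)) (z : ℂ) :
    G →L[ℂ] E.carrier :=
  (.snd ℂ E.carrier E.carrier + z • .fst ℂ E.carrier E.carrier : _ →L[ℂ] _).comp G.subtypeL

/-- `R` is the resolvent `(D + z)⁻¹` of the operator `D` with graph `G`. -/
def IsResolvent (G : Set (E.carrier × E.carrier)) (z : ℂ) (R : E.carrier →L[ℂ] E.carrier) : Prop :=
  (∀ p ∈ G, R (p.2 + z • p.1) = p.1) ∧ ∀ w, (R w, w - z • R w) ∈ G

theorem addSMulOnGraph_apply (G : Submodule ℂ (E.carrier × E.carrier)) (z : ℂ) (p : G) :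
    addSMulOnGraph G z p = p.1.2 + z • p.1.1 := rfl

theorem conj_eq_neg_of_sq_eq_neg_one {z : ℂ} (hz : z ^ 2 = -1) : conj z = -z := by
  rw [← Complex.I_sq, sq_eq_sq_iff_eq_or_eq_neg] at hz
  rcases hz with rfl | rfl <;> simp

theorem norm_eq_one_of_sq_eq_neg_one {z : ℂ} (hz : z ^ 2 = -1) : ‖z‖ = 1 := by
  rw [← Complex.I_sq, sq_eq_sq_iff_eq_or_eq_neg] at hz
  rcases hz with rfl | rfl <;> simp

theorem antilipschitz_addSMulOnGraph {G : Submodule ℂ (E.carrier × E.carrier)}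
    (hG : IsSymmetricGraph E (G : Set (E.carrier × E.carrier))) {z : ℂ} (hz : z ^ 2 = -1) :
    AntilipschitzWith 1 (addSMulOnGraph G z) := by
  have hconj := conj_eq_neg_of_sq_eq_neg_one hz
  refine AddMonoidHomClass.antilipschitz_of_bound _ fun p => ?_
  rw [NNReal.coe_one, one_mul, addSMulOnGraph_apply]
  refine max_le ?_ (hG.norm_snd_le hconj p.2)
  simpa [norm_smul, norm_eq_one_of_sq_eq_neg_one hz] using hG.norm_smul_fst_le hconj p.2

theorem surjective_addSMulOnGraph {G : Submodule ℂ (E.carrier × E.carrier)}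
    (hreg : IsRegular E E (G : Set (E.carrier × E.carrier)))
    (hG : IsSelfAdjointGraph E (G : Set (E.carrier × E.carrier))) {z : ℂ} (hz : z ^ 2 = -1) :
    Function.Surjective (addSMulOnGraph G z) := by
  obtain ⟨⟨-, hclosed, -⟩, hdense⟩ := hreg
  have : CompleteSpace G := hclosed.completeSpace_coe
  have hrange : IsClosed (Set.range (addSMulOnGraph G z)) :=
    (antilipschitz_addSMulOnGraph hG.ge hz).isClosed_range (addSMulOnGraph G z).uniformContinuous
  rw [← Set.range_eq_univ, ← hrange.closure_eq, ← dense_iff_closure_eq]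
  refine hdense.mono ?_
  rintro _ ⟨x, y, v, hxy, hyv, rfl⟩
  have hmem : (y, v) - z • (x, y) ∈ G := G.sub_mem (hG.le hyv) (G.smul_mem z hxy)
  refine ⟨⟨_, hmem⟩, ?_⟩
  calc v - z • y + z • (y - z • x) = v - z ^ 2 • x := by module
    _ = x + v := by rw [hz]; module

theorem exists_isResolvent {G : Set (E.carrier × E.carrier)} (hreg : IsRegular E E G)
    (hG : IsSelfAdjointGraph E G) {z : ℂ} (hz : z ^ 2 = -1) : ∃ R, IsResolvent G z R := by
  obtain ⟨G, rfl⟩ := hreg.1.1.1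
  have : CompleteSpace G := hreg.1.2.1.completeSpace_coe
  let e : G ≃L[ℂ] E.carrier := .ofBijective (addSMulOnGraph G z)
    (LinearMap.ker_eq_bot.2 (antilipschitz_addSMulOnGraph hG.ge hz).injective)
    (LinearMap.range_eq_top.2 (surjective_addSMulOnGraph hreg hG hz))
  refine ⟨.comp (.fst ℂ _ _) (G.subtypeL.comp e.symm.toContinuousLinearMap), fun p hp => ?_,
    fun w => ?_⟩
  · exact congrArg (fun q : G => q.1.1) (e.symm_apply_apply ⟨p, hp⟩)
  · have hw : (e.symm w).1.2 + z • (e.symm w).1.1 = w := e.apply_symm_apply w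
    have hsnd : w - z • (e.symm w).1.1 = (e.symm w).1.2 := sub_eq_of_eq_add hw.symm
    change (_, w - z • (e.symm w).1.1) ∈ G
    rw [hsnd]
    exact (e.symm w).2

namespace IsResolvent

theorem inner_apply_left {G : Set (E.carrier × E.carrier)} (hG : IsSymmetricGraph E G) {z : ℂ}
    {R R' : E.carrier →L[ℂ] E.carrier} (hR : IsResolvent G z R) (hR' : IsResolvent G (conj z) R')
    (v w : E.carrier) : E.inner (R v) w = E.inner v (R' w) := by
  have h := hG (hR'.2 w) _ (hR.2 v)
  simpa only [E.inner_sub_left, E.inner_sub_right, E.inner_smul_left, E.inner_smul_right,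
    sub_left_inj] using h.symm

/-- `(D² - z²)⁻¹ = (D + z)⁻¹(D - z)⁻¹` -/
theorem exists_mem_mem_comp {G : Submodule ℂ (E.carrier × E.carrier)} {z : ℂ}
    {R R' : E.carrier →L[ℂ] E.carrier} (hR : IsResolvent (G : Set (E.carrier × E.carrier)) z R)
    (hR' : IsResolvent (G : Set (E.carrier × E.carrier)) (-z) R') (w : E.carrier) :
    ∃ y, (R (R' w), y) ∈ G ∧ (y, w + z ^ 2 • R (R' w)) ∈ G := by
  refine ⟨R' w - z • R (R' w), hR.2 (R' w), ?_⟩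
  have hsub : (R' w - z • R (R' w), w + z ^ 2 • R (R' w)) =
      (R' w, w - -z • R' w) - z • (R (R' w), R' w - z • R (R' w)) := by
    refine Prod.ext rfl ?_
    simp only [Prod.snd_sub, Prod.smul_snd]
    module
  rw [hsub]
  exact G.sub_mem (hR'.2 w) (G.smul_mem z (hR.2 (R' w)))

end IsResolvent

theorem RepOn.isCompactOp_comp_resolvent (ρ : RepOn A E) {G : Set (E.carrier × E.carrier)}
    (hreg : IsRegular E E G) (hG : IsSelfAdjointGraph E G) {z : ℂ} (hz : z ^ 2 = -1)
    {R : E.carrier →L[ℂ] E.carrier} (hR : IsResolvent G z R) {a : A}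
    {K : E.carrier →L[ℂ] E.carrier} (hK : IsCompactOp E E K)
    (hKa : ∀ x y v, (x, y) ∈ G → (y, v) ∈ adjointGraph E E G → K (x + v) = (ρ.π a).toFun x) :
    IsCompactOp E E ((ρ.π a).toFun.comp R) := by
  have hconj := conj_eq_neg_of_sq_eq_neg_one hz
  obtain ⟨R', hR'⟩ := exists_isResolvent hreg hG ((neg_sq z).trans hz)
  have hinner := hR.inner_apply_left hG.ge (hconj ▸ hR')
  let T : adjointable E := ρ.toStarAlgHom a * (Adj.ofInner R R' hinner).toAdjointable
  have hstar : star T = (Adj.ofInner R R' hinner).adjoint.toAdjointable *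
      ρ.toStarAlgHom (star a) := by
    rw [star_mul, adjointable.star_toAdjointable, map_star]
  have hT : (T * star T).1 = K.comp (ρ.π (star a)).toFun := by
    rw [hstar]
    ext w
    obtain ⟨S, rfl⟩ := hreg.1.1.1
    obtain ⟨y, hy, hyv⟩ := hR.exists_mem_mem_comp hR' ((ρ.π (star a)).toFun w)
    refine (hKa _ _ _ hy (hG.ge hyv)).symm.trans ?_
    rw [hz, ContinuousLinearMap.comp_apply]
    congr 1
    module
  exact IsCompactOp.of_mul_star_self (T := T) (hT ▸ hK.comp_adj _)

theorem RepOn.hasLocallyCompactResolvent (ρ : RepOn A E) {S : Set A} (hS : Dense S)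
    {G : Set (E.carrier × E.carrier)} (hreg : IsRegular E E G) (hG : IsSelfAdjointGraph E G)
    (hcompact : ∀ a ∈ S, ∃ K : E.carrier →L[ℂ] E.carrier, IsCompactOp E E K ∧
      ∀ x y v, (x, y) ∈ G → (y, v) ∈ adjointGraph E E G → K (x + v) = (ρ.π a).toFun x) :
    HasLocallyCompactResolvent E ρ G := by
  intro a s hs
  have hz : ((s : ℂ) * Complex.I) ^ 2 = -1 := by
    rcases hs with rfl | rfl <;> simp
  obtain ⟨R, hR⟩ := exists_isResolvent hreg hG hz
  refine ⟨(ρ.π a).toFun.comp R, ?_, fun p hp => congrArg (ρ.π a).toFun (hR.1 p hp)⟩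
  have hcont : Continuous fun a => (ρ.π a).toFun.comp R :=
    ρ.continuous_toFun.clm_comp continuous_const
  have hclosed : IsClosed {a | IsCompactOp E E ((ρ.π a).toFun.comp R)} :=
    isClosed_closure.preimage hcont
  refine closure_minimal (fun a ha => ?_) hclosed (hS a)
  obtain ⟨K, hK, hKa⟩ := hcompact a ha
  exact ρ.isCompactOp_comp_resolvent hreg hG hz hR hK hKa

/-! ### Empty boundary -/

theorem SmoothVan0.c1Van0 {φ : ℝ → ℂ} (hφ : SmoothVan0 φ) : C1Van0 φ := by
  obtain ⟨hsmooth, ε, hε, hzero⟩ := hφ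
  have hlocal : φ =ᶠ[nhds 0] fun _ => 0 := by
    filter_upwards [Iio_mem_nhds hε] with t ht using hzero t ht.le
  exact ⟨hsmooth.of_le (by norm_cast), hzero 0 hε.le, by
    rw [hlocal.deriv_eq, deriv_const]⟩

theorem exists_smoothVan0_apply_one_eq_one : ∃ χ, SmoothVan0 χ ∧ χ 1 = 1 := by
  refine ⟨fun t => (Real.smoothTransition (2 * t - 1) : ℝ), ⟨?_, 1 / 2, by norm_num, ?_⟩, ?_⟩
  · exact Complex.ofRealCLM.contDiff.comp (Real.smoothTransition.contDiff.comp (by fun_prop))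
  · intro t ht
    beta_reduce
    rw [Real.smoothTransition.zero_of_nonpos (by linarith), Complex.ofReal_zero]
  · beta_reduce
    rw [Real.smoothTransition.one_of_one_le (by norm_num), Complex.ofReal_one]

theorem BoundaryData.bop0_eq_smul {𝓐 : DenseSub A} {Fc : SChain 𝓐 B} {c : KKCycle 𝓐 B}
    (d : BoundaryData Fc c) (hp : ∀ x, d.p.toFun x = 0) (φ : ℝ → ℂ) (x : Fc.E.carrier) :
    d.bop0 φ x = φ 1 • x := by
  have hθ : d.θ.toFun x = 0 := by rw [← d.θ_p, hp, map_zero]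
  simp only [bop0, hθ, hp, map_zero, zero_add, sub_zero]

end EmptyBoundary

/-- **Proposition.** A bordism with empty boundary (projection `p = 0`) defines a
closed cycle: if `(F, Q, 0, 0)` is a bordism then `Q = Q*`, `π(a)(Q ± i)⁻¹` is
`B`-compact for every `a ∈ A`, and hence `(F, Q)` is a closed `(𝒜,B)`-cycle. -/
theorem empty_boundary_bordism_is_cycle
    {A B : Type} [NonUnitalCStarAlgebra A] [NonUnitalCStarAlgebra B]
    {𝓐 : DenseSub A} (Fc : SChain 𝓐 B) (c₀ : KKCycle 𝓐 B)
    (d : BoundaryData Fc c₀) (hbord : d.IsBordism)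
    (hempty : ∀ x, d.p.toFun x = 0) :
    IsSelfAdjointGraph Fc.E Fc.G ∧
    HasLocallyCompactResolvent Fc.E Fc.ρ Fc.G ∧
    IsCycleOn 𝓐 Fc.E Fc.ρ Fc.gr Fc.G := by
  obtain ⟨χ, hχ, hχ_one⟩ := exists_smoothVan0_apply_one_eq_one
  have hbop (x : Fc.E.carrier) : d.bop0 χ x = x := by
    rw [d.bop0_eq_smul hempty, hχ_one, one_smul]
  obtain ⟨⟨hdom, -⟩, hhalf⟩ := hbord
  have hreg : IsRegular Fc.E Fc.E Fc.G := Fc.is.1.1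
  have hself : IsSelfAdjointGraph Fc.E Fc.G :=
    Fc.is.2.isSelfAdjointGraph hreg.1.2.2.1 fun x hx => hbop x ▸ hdom χ hχ x hx
  have hres : HasLocallyCompactResolvent Fc.E Fc.ρ Fc.G := by
    refine Fc.ρ.hasLocallyCompactResolvent 𝓐.dense hreg hself fun a ha => ?_
    obtain ⟨-, -, K, hK, hKa⟩ := hhalf χ hχ.c1Van0 ⟨a, ha⟩
    exact ⟨K, hK, fun x y v hxy hyv => (hKa x y v hxy hyv).trans (hbop _)⟩
  exact ⟨hself, hres, Fc.is.1, hself, hres⟩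

end UKK
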